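/- Let g : ℝ^p → ℝ^p be continuously differentiable and G : ℝ^p → ℝ differentiable with ∇G(v) = (Dg(v))ᵀ v for all v. Let U : ℝ^p → ℝ^p be differentiable and E : ℝ^p → ℝ differentiable with ∇E(v) = (DU(v))ᵀ v for all v. Define g*(x,y) = ∫₀¹ g(x + ξ(y − x)) dξ and G*(x,y) = ½(x + y)ᵀ g*(x,y) + ½(G(x) + G(y)) − ½(xᵀ g(x) + yᵀ g(y)). Let Δx > 0, let a, b, c : ℝ → ℝ^p be differentiable, and let D₊, D₋ : ℝ → Matrix(p,p,ℝ) take symmetric positive semidefinite values. Define f̂₊(t) = g*(b(t), c(t)) − ½ D₊(t)(c(t) − b(t)), f̂₋(t) = g*(a(t), b(t)) − ½ D₋(t)(b(t) − a(t)), Ĝ₊(t) = G*(b(t), c(t)) − ¼ (b(t)+c(t))ᵀ D₊(t)(c(t) − b(t)), and Ĝ₋(t) = G*(a(t), b(t)) − ¼ (a(t)+b(t))ᵀ D₋(t)(b(t) − a(t)). If for all t, (d/dt) U(b(t)) = −(1/Δx)[f̂₊(t) − f̂₋(t)], then the cell entropy inequality holds: for all t, (d/dt) E(b(t)) + (1/Δx)[Ĝ₊(t)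 − Ĝ₋(t)] ≤ 0. -/

import Mathlib

/-!
The entropy potential `ψ(v) = v · g(v) - G(v)` has gradient `g`, because the compatibility relation
`∇G = (Dg)ᵀ v` cancels the term coming from `Dg`. Integrating along a segment gives Tadmor's
identity `(y - x) · g*(x, y) = ψ(y) - ψ(x)` (`sub_dotProduct_gstar`), and hence
`x · g*(x, y) = G*(x, y) + ψ(x)` and `y · g*(x, y) = G*(x, y) + ψ(y)`.

Since `∇E = (DU)ᵀ v`, the entropy satisfies `d/dt E(b) = b · d/dt U(b)`, so testing the scheme with
`b` yields the entropy balance. The two contributions `ψ(b)` cancel, and splitting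
`b = ½(b + c) - ½(c - b) = ½(a + b) + ½(b - a)` in the diffusion terms leaves exactly
`-(1 / (4 Δx)) [(c - b) · D₊ (c - b) + (b - a) · D₋ (b - a)]`, which is nonpositive.
-/
open Matrix

/-- Jacobian matrix of a map `g : ℝ^p → ℝ^p` at a point. -/
noncomputable def jac {p : ℕ} (g : (Fin p → ℝ) → (Fin p → ℝ)) (v : Fin p → ℝ) :
    Matrix (Fin p) (Fin p) ℝ :=
  Matrix.of fun i k => fderiv ℝ g v (Pi.single k 1) i

/-- Gradient (as a column vector) of a scalar function on ℝ^p. -/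
noncomputable def grad {p : ℕ} (G : (Fin p → ℝ) → ℝ) (v : Fin p → ℝ) : Fin p → ℝ :=
  fun k => fderiv ℝ G v (Pi.single k 1)

/-- Tadmor's second-order entropy-conservative two-point flux. -/
noncomputable def gstar {p : ℕ} (g : (Fin p → ℝ) → (Fin p → ℝ))
    (x y : Fin p → ℝ) : Fin p → ℝ :=
  ∫ ξ in (0:ℝ)..1, g (x + ξ • (y - x))

/-- The numerical entropy flux associated with the entropy-conservative flux `g*`. -/
noncomputable def Gstar {p : ℕ} (g : (Fin p → ℝ) → (Fin p → ℝ)) (G : (Fin p → ℝ) → ℝ)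
    (x y : Fin p → ℝ) : ℝ :=
  (1/2) * ((x + y) ⬝ᵥ gstar g x y) + (1/2) * (G x + G y)
    - (1/2) * (x ⬝ᵥ g x + y ⬝ᵥ g y)

/-- The Jacobian matrix represents the Fréchet derivative. -/
lemma fderiv_eq_jac_mulVec {p : ℕ} (g : (Fin p → ℝ) → (Fin p → ℝ)) (v w : Fin p → ℝ) :
    fderiv ℝ g v w = jac g v *ᵥ w := by
  have h : jac g v = LinearMap.toMatrix' (fderiv ℝ g v : (Fin p → ℝ) →ₗ[ℝ] (Fin p → ℝ)) := by
    ext i k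
    simp [jac, LinearMap.toMatrix'_apply]
  rw [h, LinearMap.toMatrix'_mulVec]
  rfl

/-- The gradient represents the Fréchet derivative. -/
lemma fderiv_eq_grad_dotProduct {p : ℕ} (G : (Fin p → ℝ) → ℝ) (v w : Fin p → ℝ) :
    fderiv ℝ G v w = grad G v ⬝ᵥ w := by
  conv_lhs => rw [pi_eq_sum_univ' w]
  rw [map_sum]
  simp only [map_smul, smul_eq_mul, dotProduct, grad]
  exact Finset.sum_congr rfl fun i _ => mul_comm _ _

/-- The relation `∇E = (DU)ᵀ v` says that `dE = v · dU`. -/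
lemma fderiv_of_grad_eq {p : ℕ} {U : (Fin p → ℝ) → (Fin p → ℝ)} {E : (Fin p → ℝ) → ℝ}
    {v : Fin p → ℝ} (h : grad E v = (jac U v)ᵀ *ᵥ v) (w : Fin p → ℝ) :
    fderiv ℝ E v w = v ⬝ᵥ fderiv ℝ U v w := by
  rw [fderiv_eq_grad_dotProduct, fderiv_eq_jac_mulVec, h, mulVec_transpose, dotProduct_mulVec]

/-- The entropy potential `ψ(v) = v · g(v) - G(v)`. -/
def entropyPotential {p : ℕ} (g : (Fin p → ℝ) → (Fin p → ℝ)) (G : (Fin p → ℝ) → ℝ)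
    (v : Fin p → ℝ) : ℝ :=
  v ⬝ᵥ g v - G v

/-- Along any differentiable curve `γ`, `d/dt ψ(γ) = γ' · g(γ)`; that is, `∇ψ = g`. -/
lemma hasDerivAt_entropyPotential {p : ℕ} {g : (Fin p → ℝ) → (Fin p → ℝ)}
    {G : (Fin p → ℝ) → ℝ} (hg : Differentiable ℝ g) (hG : Differentiable ℝ G)
    (hcompat : ∀ v, grad G v = (jac g v)ᵀ *ᵥ v) {γ : ℝ → Fin p → ℝ} {γ' : Fin p → ℝ} {t : ℝ}
    (hγ : HasDerivAt γ γ' t) :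
    HasDerivAt (fun s => entropyPotential g G (γ s)) (γ' ⬝ᵥ g (γ t)) t := by
  have h1 : HasDerivAt (fun s => g (γ s)) (fderiv ℝ g (γ t) γ') t :=
    (hg (γ t)).hasFDerivAt.comp_hasDerivAt t hγ
  have h2 : HasDerivAt (fun s => G (γ s)) (fderiv ℝ G (γ t) γ') t :=
    (hG (γ t)).hasFDerivAt.comp_hasDerivAt t hγ
  have h3 : HasDerivAt (fun s => γ s ⬝ᵥ g (γ s))
      (∑ i, (γ' i * g (γ t) i + γ t i * fderiv ℝ g (γ t) γ' i)) t :=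
    HasDerivAt.fun_sum fun i _ => (hasDerivAt_pi.1 hγ i).mul (hasDerivAt_pi.1 h1 i)
  refine (h3.sub h2).congr_deriv ?_
  rw [fderiv_of_grad_eq (hcompat _), Finset.sum_add_distrib]
  simp only [dotProduct]
  ring

/-- Tadmor's entropy-conservation identity `[[v]] · g* = [[ψ]]`: integrate `∇ψ = g` along the
segment from `x` to `y`. -/
lemma sub_dotProduct_gstar {p : ℕ} {g : (Fin p → ℝ) → (Fin p → ℝ)}
    {G : (Fin p → ℝ) → ℝ} (hg : ContDiff ℝ 1 g) (hG : Differentiable ℝ G)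
    (hcompat : ∀ v, grad G v = (jac g v)ᵀ *ᵥ v) (x y : Fin p → ℝ) :
    (y - x) ⬝ᵥ gstar g x y = entropyPotential g G y - entropyPotential g G x := by
  have hcont : Continuous fun ξ : ℝ => g (x + ξ • (y - x)) :=
    hg.continuous.comp (by fun_prop)
  let L : (Fin p → ℝ) →L[ℝ] ℝ := ∑ i, (y - x) i • ContinuousLinearMap.proj i
  have hL (w : Fin p → ℝ) : L w = (y - x) ⬝ᵥ w := by
    simp [L, dotProduct]
  have hγ (ξ : ℝ) : HasDerivAt (fun s : ℝ => x + s • (y - x)) (y - x) ξ := by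
    simpa using ((hasDerivAt_id ξ).smul_const (y - x)).const_add x
  have hftc := intervalIntegral.integral_eq_sub_of_hasDerivAt (a := 0) (b := 1)
    (fun ξ _ => hasDerivAt_entropyPotential (hg.differentiable one_ne_zero) hG hcompat (hγ ξ))
    (by simp only [← hL]; exact (L.continuous.comp hcont).intervalIntegrable 0 1)
  rw [← hL, gstar, ← L.intervalIntegral_comp_comm (hcont.intervalIntegrable 0 1)]
  simpa [hL] using hftc

/-- The flux `g*` tested against the left state. -/
lemma left_dotProduct_gstar {p : ℕ} {g : (Fin p → ℝ) → (Fin p → ℝ)}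
    {G : (Fin p → ℝ) → ℝ} (hg : ContDiff ℝ 1 g) (hG : Differentiable ℝ G)
    (hcompat : ∀ v, grad G v = (jac g v)ᵀ *ᵥ v) (x y : Fin p → ℝ) :
    x ⬝ᵥ gstar g x y = Gstar g G x y + entropyPotential g G x := by
  have h := sub_dotProduct_gstar hg hG hcompat x y
  simp only [Gstar, entropyPotential, sub_dotProduct, add_dotProduct] at h ⊢
  linarith

/-- The flux `g*` tested against the right state. -/
lemma right_dotProduct_gstar {p : ℕ} {g : (Fin p → ℝ) → (Fin p → ℝ)}
    {G : (Fin p → ℝ) → ℝ} (hg : ContDiff ℝ 1 g) (hG : Differentiable ℝ G)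
    (hcompat : ∀ v, grad G v = (jac g v)ᵀ *ᵥ v) (x y : Fin p → ℝ) :
    y ⬝ᵥ gstar g x y = Gstar g G x y + entropyPotential g G y := by
  have h := sub_dotProduct_gstar hg hG hcompat x y
  simp only [Gstar, entropyPotential, sub_dotProduct, add_dotProduct] at h ⊢
  linarith

/-- Cell entropy inequality: adding symmetric positive semidefinite diffusion
`−½ D [[v]]` to an entropy-conservative flux yields an entropy-stable scheme. -/
theorem cell_entropy_inequality {p : ℕ}
    (g : (Fin p → ℝ) → (Fin p → ℝ)) (G : (Fin p → ℝ) → ℝ)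
    (hg : ContDiff ℝ 1 g) (hG : Differentiable ℝ G)
    (hcompat : ∀ v, grad G v = (jac g v)ᵀ *ᵥ v)
    (U : (Fin p → ℝ) → (Fin p → ℝ)) (E : (Fin p → ℝ) → ℝ)
    (hU : Differentiable ℝ U) (hE : Differentiable ℝ E)
    (hEU : ∀ v, grad E v = (jac U v)ᵀ *ᵥ v)
    (Δx : ℝ) (hΔx : 0 < Δx)
    (a b c : ℝ → (Fin p → ℝ))
    (ha : Differentiable ℝ a) (hb : Differentiable ℝ b) (hc : Differentiable ℝ c)
    (Dp Dm : ℝ → Matrix (Fin p) (Fin p) ℝ)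
    (hDp : ∀ t, (Dp t).PosSemidef) (hDm : ∀ t, (Dm t).PosSemidef)
    (fhatp fhatm : ℝ → (Fin p → ℝ)) (Ghatp Ghatm : ℝ → ℝ)
    (hfp : ∀ t, fhatp t = gstar g (b t) (c t) - (1/2 : ℝ) • (Dp t *ᵥ (c t - b t)))
    (hfm : ∀ t, fhatm t = gstar g (a t) (b t) - (1/2 : ℝ) • (Dm t *ᵥ (b t - a t)))
    (hGp : ∀ t, Ghatp t = Gstar g G (b t) (c t)
        - (1/4) * ((b t + c t) ⬝ᵥ (Dp t *ᵥ (c t - b t))))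
    (hGm : ∀ t, Ghatm t = Gstar g G (a t) (b t)
        - (1/4) * ((a t + b t) ⬝ᵥ (Dm t *ᵥ (b t - a t))))
    (hscheme : ∀ t, deriv (fun s => U (b s)) t = -(1/Δx) • (fhatp t - fhatm t)) :
    ∀ t, deriv (fun s => E (b s)) t + (1/Δx) * (Ghatp t - Ghatm t) ≤ 0 := by
  intro t
  have hbt := (hb t).hasDerivAt
  have hdU : deriv (fun s => U (b s)) t = fderiv ℝ U (b t) (deriv b t) :=
    ((hU (b t)).hasFDerivAt.comp_hasDerivAt t hbt).deriv
  have hdE : deriv (fun s => E (b s)) t = b t ⬝ᵥ deriv (fun s => U (b s)) t := by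
    rw [hdU, ← fderiv_of_grad_eq (hEU _)]
    exact ((hE (b t)).hasFDerivAt.comp_hasDerivAt t hbt).deriv
  have hp : 0 ≤ (c t - b t) ⬝ᵥ (Dp t *ᵥ (c t - b t)) := by
    simpa using (hDp t).dotProduct_mulVec_nonneg (c t - b t)
  have hm : 0 ≤ (b t - a t) ⬝ᵥ (Dm t *ᵥ (b t - a t)) := by
    simpa using (hDm t).dotProduct_mulVec_nonneg (b t - a t)
  have hl := left_dotProduct_gstar hg hG hcompat (b t) (c t)
  have hr := right_dotProduct_gstar hg hG hcompat (a t) (b t)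
  have key : deriv (fun s => E (b s)) t + (1/Δx) * (Ghatp t - Ghatm t)
      = -(1/Δx) * ((1/4) * ((c t - b t) ⬝ᵥ (Dp t *ᵥ (c t - b t))
          + (b t - a t) ⬝ᵥ (Dm t *ᵥ (b t - a t)))) := by
    rw [hdE, hscheme, hfp, hfm, hGp, hGm]
    -- The arguments of `Dp` and `Dm` stay opaque, so that only the left factors are expanded.
    generalize Dp t *ᵥ (c t - b t) = P
    generalize Dm t *ᵥ (b t - a t) = M
    simp only [dotProduct_smul, dotProduct_sub, smul_eq_mul, sub_dotProduct, add_dotProduct, hl, hr]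
    ring
  rw [key]
  exact mul_nonpos_of_nonpos_of_nonneg (neg_nonpos.2 (by positivity)) (by linarith)
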